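/- arXiv:2604.17401 — 7 statements merged into one kernel-verified Lean document; each statement's English description precedes it below -/
import Mathlib

section
/- For every binary string w : List Bool, the Markov fraction at node w of the Markov fraction tree coincides with the index of the Cohn matrix with parameter a = 0 at the corresponding node of the Cohn tree; precisely, (cm_0(w)) 0 0 = (mf(w)).num and (cm_0(w)) 0 1 = (mf(w)).den, so that mf(w) = (cm_0(w)) 0 0 / (cm_0(w)) 0 1 as rational numbers. -/
/-!
A Cohn matrix here has determinant `1` and trace three times its `(0, 1)` entry. Let two adjacent
Cohn matrices `L`, `R` have first rows `(a, b)` and `(c, d)`, and put `q = b * c - a * d`.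
Then `L * R` has `(0, 1)` entry `p = 3 * b * d - q`, and the triple `(b, d, q)` satisfies the
Markov equation in the form `p * q = b ^ 2 + d ^ 2`. Using `det R = 1` one finds that the `(0, 0)`
entry `n` of `L * R` satisfies `n * q = a * b + c * d`. Hence `n / p` is the Springborn mediant
of `a / b` and `c / d`, and it is in lowest terms because the first row of a matrix of determinant
`1` is coprime.

All of this is an invariant (`CohnPair`) of the two moves in the tree: replacing `R` by `L * R`
replaces `q` by `d`, and replacing `L` by `L * R` replaces `q` by `b`, which are the two
neighbouring solutions of the Markov equation. The trace condition for `L * R` is the Fricke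
identity combined with the Markov equation (`CohnPair.mul_trace`).
-/

/-- The Springborn mediant of two rationals. -/
def sm (x y : ℚ) : ℚ :=
  ((x.num * x.den + y.num * y.den : ℤ) : ℚ) / ((x.den ^ 2 + y.den ^ 2 : ℕ) : ℚ)

/-- The Markov fraction tree: `MT []  = (0, 1/2)`, and for `MT w = (x, y)`,
`MT (w ++ [false]) = (x, sm x y)` and `MT (w ++ [true]) = (sm x y, y)`. -/
def MT (w : List Bool) : ℚ × ℚ :=
  w.foldl (fun p b => if b then (sm p.1 p.2, p.2) else (p.1, sm p.1 p.2)) (0, 1/2)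

/-- The Markov fraction at node `w`. -/
def mf (w : List Bool) : ℚ := sm (MT w).1 (MT w).2

/-- Aigner's initial Cohn matrix `A(a)`. -/
def Amat (a : ℤ) : Matrix (Fin 2) (Fin 2) ℤ :=
  !![a, 1; 3*a - a^2 - 1, 3 - a]

/-- Aigner's initial Cohn matrix `B(a)`. -/
def Bmat (a : ℤ) : Matrix (Fin 2) (Fin 2) ℤ :=
  !![2*a + 1, 2; -2*a^2 + 4*a + 2, 5 - 2*a]

/-- The Cohn tree with parameter `a`: `CT a [] = (A a, B a)`, and for `CT a w = (L, R)`,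
`CT a (w ++ [false]) = (L, L*R)` and `CT a (w ++ [true]) = (L*R, R)`. -/
def CT (a : ℤ) (w : List Bool) : Matrix (Fin 2) (Fin 2) ℤ × Matrix (Fin 2) (Fin 2) ℤ :=
  w.foldl (fun p b => if b then (p.1 * p.2, p.2) else (p.1, p.1 * p.2)) (Amat a, Bmat a)

/-- The Cohn matrix at node `w`. -/
def cm (a : ℤ) (w : List Bool) : Matrix (Fin 2) (Fin 2) ℤ :=
  (CT a w).1 * (CT a w).2

/-- Adjacent Cohn matrices: determinant `1`, trace three times the (positive) upper right entry,
and the Markov equation for the two upper right entries `b`, `d` together with `q = b * c - a * d`,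
written as `(3 * b * d - q) * q = b ^ 2 + d ^ 2`. -/
structure CohnPair (L R : Matrix (Fin 2) (Fin 2) ℤ) : Prop where
  detL : L 0 0 * L 1 1 - L 0 1 * L 1 0 = 1
  detR : R 0 0 * R 1 1 - R 0 1 * R 1 0 = 1
  trL : L 1 1 = 3 * L 0 1 - L 0 0
  trR : R 1 1 = 3 * R 0 1 - R 0 0
  posL : 0 < L 0 1
  posR : 0 < R 0 1
  posQ : 0 < L 0 1 * R 0 0 - L 0 0 * R 0 1
  markov : (3 * L 0 1 * R 0 1 - (L 0 1 * R 0 0 - L 0 0 * R 0 1)) *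
    (L 0 1 * R 0 0 - L 0 0 * R 0 1) = L 0 1 ^ 2 + R 0 1 ^ 2

/-- The first row of `C` is the numerator and denominator of `x`. -/
def IsIndex (x : ℚ) (C : Matrix (Fin 2) (Fin 2) ℤ) : Prop :=
  C 0 0 = x.num ∧ C 0 1 = (x.den : ℤ)

namespace CohnPair

variable {L R : Matrix (Fin 2) (Fin 2) ℤ}

lemma mul_upper (h : CohnPair L R) :
    (L * R) 0 1 = 3 * L 0 1 * R 0 1 - (L 0 1 * R 0 0 - L 0 0 * R 0 1) := by
  rw [Matrix.mul_apply, Fin.sum_univ_two, h.trR]; ring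

lemma mul_det (h : CohnPair L R) :
    (L * R) 0 0 * (L * R) 1 1 - (L * R) 0 1 * (L * R) 1 0 = 1 := by
  simp only [Matrix.mul_apply, Fin.sum_univ_two]
  linear_combination (R 0 0 * R 1 1 - R 0 1 * R 1 0) * h.detL + h.detR

lemma mul_pos (h : CohnPair L R) : 0 < (L * R) 0 1 := by
  have h1 := h.markov
  rw [← h.mul_upper] at h1
  have := h.posL
  have := h.posR
  exact pos_of_mul_pos_left (h1 ▸ by positivity) h.posQ.le

/-- The relation `c * p - n * d = b` between the first rows of `L * R` and `R`. -/
lemma right_q (h : CohnPair L R) :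
    (L * R) 0 1 * R 0 0 - (L * R) 0 0 * R 0 1 = L 0 1 := by
  simp only [Matrix.mul_apply, Fin.sum_univ_two]
  linear_combination L 0 1 * h.detR

/-- The relation `b * n - a * p = d` between the first rows of `L` and `L * R`. -/
lemma left_q (h : CohnPair L R) :
    L 0 1 * (L * R) 0 0 - L 0 0 * (L * R) 0 1 = R 0 1 := by
  apply mul_left_cancel₀ h.posR.ne'
  have h1 := h.markov
  rw [← h.mul_upper] at h1
  linear_combination (-L 0 1) * h.right_q + h1

lemma mul_num (h : CohnPair L R) :
    (L * R) 0 0 * (L 0 1 * R 0 0 - L 0 0 * R 0 1) = L 0 0 * L 0 1 + R 0 0 * R 0 1 := by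
  apply mul_left_cancel₀ h.posR.ne'
  have h1 := h.markov
  rw [← h.mul_upper] at h1
  linear_combination (-(L 0 1 * R 0 0 - L 0 0 * R 0 1)) * h.right_q + R 0 0 * h1

/-- The trace of `L * R` is three times its upper right entry; after multiplying by `b * d` and
eliminating the lower left entries with the determinants, this is the Markov equation. -/
lemma mul_trace (h : CohnPair L R) :
    (L * R) 1 1 = 3 * (L * R) 0 1 - (L * R) 0 0 := by
  apply mul_left_cancel₀ (mul_ne_zero h.posL.ne' h.posR.ne')
  have h1 := h.markov
  have h2 := h.detL
  have h3 := h.detR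
  rw [h.mul_upper]
  simp only [Matrix.mul_apply, Fin.sum_univ_two]
  rw [h.trL] at h2 ⊢
  rw [h.trR] at h3 ⊢
  linear_combination (-R 0 1 ^ 2) * h2 - L 0 1 ^ 2 * h3 + h1

lemma left (h : CohnPair L R) : CohnPair L (L * R) where
  detL := h.detL
  detR := h.mul_det
  trL := h.trL
  trR := h.mul_trace
  posL := h.posL
  posR := h.mul_pos
  posQ := by rw [h.left_q]; exact h.posR
  markov := by
    have h1 := h.markov
    rw [h.left_q, h.mul_upper]
    linear_combination h1

lemma right (h : CohnPair L R) : CohnPair (L * R) R where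
  detL := h.mul_det
  detR := h.detR
  trL := h.mul_trace
  trR := h.trR
  posL := h.mul_pos
  posR := h.posR
  posQ := by rw [h.right_q]; exact h.posL
  markov := by
    have h1 := h.markov
    rw [h.right_q, h.mul_upper]
    linear_combination h1

/-- If `L`, `R` have indices `x`, `y`, then `L * R` has index `sm x y`: numerator and denominator
of the mediant share the factor `q`, and cancelling it leaves the coprime first row of `L * R`. -/
lemma isIndex_sm (h : CohnPair L R) {x y : ℚ} (hx : IsIndex x L) (hy : IsIndex y R) :
    IsIndex (sm x y) (L * R) := by
  have hp := h.mul_pos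
  have hq := h.posQ
  have hm := h.markov
  rw [← h.mul_upper] at hm
  have hcop : IsCoprime ((L * R) 0 0) ((L * R) 0 1) :=
    ⟨(L * R) 1 1, -(L * R) 1 0, by linear_combination h.mul_det⟩
  have hval : sm x y = ((L * R) 0 0 : ℚ) / ((L * R) 0 1 : ℚ) := by
    have hn : x.num * x.den + y.num * y.den =
        (L * R) 0 0 * (L 0 1 * R 0 0 - L 0 0 * R 0 1) := by
      rw [h.mul_num, ← hx.1, ← hx.2, ← hy.1, ← hy.2]
    have hd : ((x.den ^ 2 + y.den ^ 2 : ℕ) : ℤ) =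
        (L * R) 0 1 * (L 0 1 * R 0 0 - L 0 0 * R 0 1) := by
      rw [hm, hx.2, hy.2]; push_cast; ring
    rw [sm, hn, ← Int.cast_natCast (R := ℚ) (x.den ^ 2 + y.den ^ 2), hd, Int.cast_mul,
      Int.cast_mul]
    exact mul_div_mul_right _ _ (by exact_mod_cast hq.ne')
  rw [IsIndex, hval]
  have hcop' := Int.isCoprime_iff_nat_coprime.mp hcop
  exact ⟨(Rat.num_div_eq_of_coprime hp hcop').symm, (Rat.den_div_eq_of_coprime hp hcop').symm⟩

end CohnPair

lemma cohnPair_CT (w : List Bool) :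
    CohnPair (CT 0 w).1 (CT 0 w).2 ∧
      IsIndex (MT w).1 (CT 0 w).1 ∧ IsIndex (MT w).2 (CT 0 w).2 := by
  -- The children of a node append on the right, so the induction removes the last letter.
  induction w using List.reverseRecOn with
  | nil =>
    refine ⟨?_, ?_, ?_⟩
    · constructor <;> simp [CT, Amat, Bmat]
    · simp [IsIndex, CT, MT, Amat]
    · have h1 : ((1 : ℚ) / 2).num = 1 := by norm_num
      have h2 : ((1 : ℚ) / 2).den = 2 := by norm_num
      simp only [IsIndex, CT, MT, List.foldl_nil, h1, h2]
      simp [Bmat]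
  | append_singleton w b ih =>
    obtain ⟨h, hx, hy⟩ := ih
    have hs := h.isIndex_sm hx hy
    have hC : CT 0 (w ++ [b]) = if b then ((CT 0 w).1 * (CT 0 w).2, (CT 0 w).2)
        else ((CT 0 w).1, (CT 0 w).1 * (CT 0 w).2) := by
      simp [CT, List.foldl_append]
    have hM : MT (w ++ [b]) = if b then (sm (MT w).1 (MT w).2, (MT w).2)
        else ((MT w).1, sm (MT w).1 (MT w).2) := by
      simp [MT, List.foldl_append]
    rw [hC, hM]
    cases b
    · exact ⟨h.left, hx, hs⟩
    · exact ⟨h.right, hs, hy⟩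

/-- **Theorem 3.1.** The Markov fraction at node `w` coincides with the index of the
Cohn matrix with parameter `a = 0` at the corresponding node of the Cohn tree. -/
theorem markov_fraction_eq_cohn_index (w : List Bool) :
    cm 0 w 0 0 = (mf w).num ∧ cm 0 w 0 1 = ((mf w).den : ℤ) ∧
    mf w = (cm 0 w 0 0 : ℚ) / (cm 0 w 0 1 : ℚ) := by
  obtain ⟨h, hx, hy⟩ := cohnPair_CT w
  obtain ⟨hn, hd⟩ := h.isIndex_sm hx hy
  refine ⟨hn, hd, ?_⟩
  change mf w = (((CT 0 w).1 * (CT 0 w).2) 0 0 : ℚ) / (((CT 0 w).1 * (CT 0 w).2) 0 1 : ℚ)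
  rw [hn, hd]
  exact (Rat.num_div_den _).symm
end

section
/- For every integer a and every binary string w : List Bool, the Cohn matrix with parameter a at node w satisfies (cm_a(w)) 0 1 = (mf(w)).den and (cm_a(w)) 0 0 = a·(mf(w)).den + (mf(w)).num; consequently the index (cm_a(w)) 0 0 / (cm_a(w)) 0 1 equals a + mf(w), a Markov fraction lying between a and a + 1/2. -/
/-- `M` is the Cohn matrix with parameter `a` of the fraction `x = p / q`: it has first row
`(a q + p, q)`, trace `3 q` and determinant `1`. The trace condition is recorded as the value of
the lower-right entry, and the determinant is written out in the entries. -/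
structure IsCohnMatrix (a : ℤ) (x : ℚ) (M : Matrix (Fin 2) (Fin 2) ℤ) : Prop where
  e01 : M 0 1 = (x.den : ℤ)
  e00 : M 0 0 = a * (x.den : ℤ) + x.num
  e11 : M 1 1 = 3 * (x.den : ℤ) - a * (x.den : ℤ) - x.num
  det : M 0 0 * M 1 1 - M 0 1 * M 1 0 = 1

/-- The invariant of a node: `x, y` are the two fractions and `L, R` the two Cohn matrices
there. The Markov triple consists of the denominators of `x` and `y` and
`y.num * x.den - x.num * y.den`. -/
structure CohnNode (a : ℤ) (x y : ℚ) (L R : Matrix (Fin 2) (Fin 2) ℤ) : Prop where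
  hL : IsCohnMatrix a x L
  hR : IsCohnMatrix a y R
  pos : 0 < y.num * (x.den : ℤ) - x.num * (y.den : ℤ)
  markov : (x.den : ℤ) ^ 2 + (y.den : ℤ) ^ 2 + (y.num * (x.den : ℤ) - x.num * (y.den : ℤ)) ^ 2 =
    3 * (x.den : ℤ) * (y.den : ℤ) * (y.num * (x.den : ℤ) - x.num * (y.den : ℤ))
  lo : 0 ≤ x.num
  hi : 2 * y.num ≤ (y.den : ℤ)

/-- The integer identities behind one step of the tree, with `s, t` the lower-left entries of the
two Cohn matrices of `p₁ / q₁` and `p₂ / q₂`, and `p₃, q₃` read off from the first row of their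
product. -/
lemma product_identities {a p₁ q₁ p₂ q₂ s t p₃ q₃ : ℤ} (hq₁ : 0 < q₁) (hq₂ : 0 < q₂)
    (hd : 0 < p₂ * q₁ - p₁ * q₂)
    (hm : q₁ ^ 2 + q₂ ^ 2 + (p₂ * q₁ - p₁ * q₂) ^ 2 = 3 * q₁ * q₂ * (p₂ * q₁ - p₁ * q₂))
    (hs : (a * q₁ + p₁) * (3 * q₁ - a * q₁ - p₁) - q₁ * s = 1)
    (ht : (a * q₂ + p₂) * (3 * q₂ - a * q₂ - p₂) - q₂ * t = 1)
    (hq₃ : q₃ = (a * q₁ + p₁) * q₂ + q₁ * (3 * q₂ - a * q₂ - p₂))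
    (hp₃ : p₃ = (a * q₁ + p₁) * (a * q₂ + p₂) + q₁ * t - a * q₃) :
    (p₂ * q₁ - p₁ * q₂) * q₃ = q₁ ^ 2 + q₂ ^ 2 ∧
    (p₂ * q₁ - p₁ * q₂) * p₃ = p₁ * q₁ + p₂ * q₂ ∧
    p₃ * q₁ - p₁ * q₃ = q₂ ∧
    p₂ * q₃ - p₃ * q₂ = q₁ ∧
    s * q₂ + (3 * q₁ - a * q₁ - p₁) * (3 * q₂ - a * q₂ - p₂) = 3 * q₃ - a * q₃ - p₃ := by
  have h1 : (p₂ * q₁ - p₁ * q₂) * q₃ = q₁ ^ 2 + q₂ ^ 2 := by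
    rw [hq₃]; linear_combination -hm
  -- the upper-right entry of `(L * R) R⁻¹ = L`
  have h4 : p₂ * q₃ - p₃ * q₂ = q₁ := by
    rw [hp₃, hq₃]; linear_combination q₁ * ht
  have h2 : (p₂ * q₁ - p₁ * q₂) * p₃ = p₁ * q₁ + p₂ * q₂ := by
    refine mul_right_cancel₀ hq₂.ne' ?_
    linear_combination p₂ * h1 - (p₂ * q₁ - p₁ * q₂) * h4
  have h3 : p₃ * q₁ - p₁ * q₃ = q₂ := by
    refine mul_left_cancel₀ hd.ne' ?_
    linear_combination q₁ * h2 - p₁ * h1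
  refine ⟨h1, h2, h3, h4, ?_⟩
  -- `q₁` times the trace identity is the upper-right entry of `L⁻¹ (L * R) = R`, up to `h3`
  refine mul_left_cancel₀ hq₁.ne' ?_
  linear_combination (-q₂) * hs + h3 - (3 * q₁ - a * q₁ - p₁) * hq₃

/-- If a common factor `d` cancels in the Springborn mediant and leaves coprime `p` and `q > 0`,
these are its numerator and denominator. -/
lemma sm_eq_of_mul {x y : ℚ} {d p q : ℤ} (hd : 0 < d) (hq : 0 < q)
    (h1 : d * q = (x.den : ℤ) ^ 2 + (y.den : ℤ) ^ 2)
    (h2 : d * p = x.num * x.den + y.num * y.den) (hc : IsCoprime p q) :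
    (sm x y).num = p ∧ ((sm x y).den : ℤ) = q := by
  have h : sm x y = (p : ℚ) / (q : ℚ) := by
    have hd' : (d : ℚ) ≠ 0 := by exact_mod_cast hd.ne'
    have h1' : ((x.den ^ 2 + y.den ^ 2 : ℕ) : ℚ) = d * q := by exact_mod_cast h1.symm
    rw [sm, ← h2, h1', Int.cast_mul, mul_div_mul_left _ _ hd']
  have hc' : Nat.Coprime p.natAbs q.natAbs := Int.isCoprime_iff_nat_coprime.mp hc
  rw [h]
  exact ⟨Rat.num_div_eq_of_coprime hq hc', Rat.den_div_eq_of_coprime hq hc'⟩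

/-- The product `L * R` is the Cohn matrix of the mediant of `x` and `y`, and the two child pairs
have `d`-values `y.den` and `x.den`. -/
lemma CohnNode.mediant {a : ℤ} {x y : ℚ} {L R : Matrix (Fin 2) (Fin 2) ℤ}
    (h : CohnNode a x y L R) :
    IsCohnMatrix a (sm x y) (L * R) ∧
    (sm x y).num * (x.den : ℤ) - x.num * ((sm x y).den : ℤ) = y.den ∧
    y.num * ((sm x y).den : ℤ) - (sm x y).num * (y.den : ℤ) = x.den ∧
    ((sm x y).den : ℤ) =
      3 * (x.den : ℤ) * (y.den : ℤ) - (y.num * (x.den : ℤ) - x.num * (y.den : ℤ)) ∧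
    0 < (sm x y).num ∧ 2 * (sm x y).num < ((sm x y).den : ℤ) := by
  obtain ⟨⟨l01, l00, l11, ls⟩, ⟨r01, r00, r11, rt⟩, hd, hm, hlo, hhi⟩ := h
  have hq₁ : (0 : ℤ) < x.den := by exact_mod_cast x.den_pos
  have hq₂ : (0 : ℤ) < y.den := by exact_mod_cast y.den_pos
  have e00 : (L * R) 0 0 = L 0 0 * R 0 0 + L 0 1 * R 1 0 := by
    simp [Matrix.mul_apply, Fin.sum_univ_two]
  have e01 : (L * R) 0 1 = L 0 0 * R 0 1 + L 0 1 * R 1 1 := by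
    simp [Matrix.mul_apply, Fin.sum_univ_two]
  have e10 : (L * R) 1 0 = L 1 0 * R 0 0 + L 1 1 * R 1 0 := by
    simp [Matrix.mul_apply, Fin.sum_univ_two]
  have e11 : (L * R) 1 1 = L 1 0 * R 0 1 + L 1 1 * R 1 1 := by
    simp [Matrix.mul_apply, Fin.sum_univ_two]
  have hdet : (L * R) 0 0 * (L * R) 1 1 - (L * R) 0 1 * (L * R) 1 0 = 1 := by
    rw [e00, e01, e10, e11]
    linear_combination (R 0 0 * R 1 1 - R 0 1 * R 1 0) * ls + rt
  rw [l00, l01, l11] at ls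
  rw [r00, r01, r11] at rt
  rw [l00, l01, r00] at e00
  rw [l00, l01, r01, r11] at e01
  rw [l11, r01, r11] at e11
  obtain ⟨q₃, hq₃⟩ : ∃ q, q = (L * R) 0 1 := ⟨_, rfl⟩
  obtain ⟨p₃, hp₃⟩ : ∃ p, p = (L * R) 0 0 - a * q₃ := ⟨_, rfl⟩
  obtain ⟨h1, h2, h3, h4, h5⟩ := product_identities hq₁ hq₂ hd hm ls rt
    (hq₃.trans e01) (hp₃.trans (by rw [e00]))
  have hq₃pos : 0 < q₃ := by
    refine pos_of_mul_pos_right (a := y.num * (x.den : ℤ) - x.num * (y.den : ℤ)) ?_ hd.le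
    rw [h1]; positivity
  have hcop : IsCoprime p₃ q₃ := by
    refine ⟨(L * R) 1 1, a * (L * R) 1 1 - (L * R) 1 0, ?_⟩
    rw [hp₃]; linear_combination hdet + (- (L * R) 1 0) * hq₃
  obtain ⟨hnum, hden⟩ := sm_eq_of_mul hd hq₃pos h1 h2 hcop
  have hp₂ : 0 < y.num := by
    have : 0 ≤ x.num * (y.den : ℤ) := by positivity
    exact pos_of_mul_pos_left (b := (x.den : ℤ)) (by linarith) hq₁.le
  have hx : 2 * x.num < (x.den : ℤ) := by
    refine lt_of_mul_lt_mul_right (a := (y.den : ℤ)) ?_ hq₂.le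
    have := mul_le_mul_of_nonneg_right hhi hq₁.le
    linarith
  rw [hnum, hden]
  refine ⟨⟨?_, ?_, ?_, hdet⟩, h3, h4, ?_, ?_, ?_⟩
  · rw [hden, hq₃]
  · rw [hnum, hden, hp₃]; ring
  · rw [hnum, hden, e11]; exact h5
  · rw [hq₃, e01]; ring
  · refine pos_of_mul_pos_right (a := y.num * (x.den : ℤ) - x.num * (y.den : ℤ)) ?_ hd.le
    rw [h2]; positivity
  · refine lt_of_mul_lt_mul_left (a := y.num * (x.den : ℤ) - x.num * (y.den : ℤ)) ?_ hd.le
    rw [h1]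
    have i1 := mul_lt_mul_of_pos_right hx hq₁
    have i2 := mul_le_mul_of_nonneg_right hhi hq₂.le
    linarith

lemma CohnNode.left {a : ℤ} {x y : ℚ} {L R : Matrix (Fin 2) (Fin 2) ℤ}
    (h : CohnNode a x y L R) : CohnNode a x (sm x y) L (L * R) := by
  obtain ⟨hC, h3, h4, h5, h6, h7⟩ := h.mediant
  have hq₂ : (0 : ℤ) < y.den := by exact_mod_cast y.den_pos
  refine ⟨h.hL, hC, by rw [h3]; exact hq₂, ?_, h.lo, h7.le⟩
  rw [h3, h5]
  linear_combination h.markov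

lemma CohnNode.right {a : ℤ} {x y : ℚ} {L R : Matrix (Fin 2) (Fin 2) ℤ}
    (h : CohnNode a x y L R) : CohnNode a (sm x y) y (L * R) R := by
  obtain ⟨hC, h3, h4, h5, h6, h7⟩ := h.mediant
  have hq₁ : (0 : ℤ) < x.den := by exact_mod_cast x.den_pos
  refine ⟨hC, h.hR, by rw [h4]; exact hq₁, ?_, h6.le, h.hi⟩
  rw [h4, h5]
  linear_combination h.markov

lemma cohnNode_root (a : ℤ) : CohnNode a 0 (1 / 2) (Amat a) (Bmat a) := by
  have hn : (1 / 2 : ℚ).num = 1 := by norm_num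
  have hd : (1 / 2 : ℚ).den = 2 := by norm_num
  have hA : Amat a 0 0 = a ∧ Amat a 0 1 = 1 ∧ Amat a 1 0 = 3 * a - a ^ 2 - 1 ∧
      Amat a 1 1 = 3 - a := ⟨rfl, rfl, rfl, rfl⟩
  have hB : Bmat a 0 0 = 2 * a + 1 ∧ Bmat a 0 1 = 2 ∧ Bmat a 1 0 = -2 * a ^ 2 + 4 * a + 2 ∧
      Bmat a 1 1 = 5 - 2 * a := ⟨rfl, rfl, rfl, rfl⟩
  obtain ⟨a00, a01, a10, a11⟩ := hA
  obtain ⟨b00, b01, b10, b11⟩ := hB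
  refine ⟨⟨?_, ?_, ?_, ?_⟩, ⟨?_, ?_, ?_, ?_⟩, ?_, ?_, ?_, ?_⟩ <;>
    simp only [hn, hd, Rat.num_zero, Rat.den_zero, a00, a01, a10, a11, b00, b01, b10, b11] <;>
    push_cast <;> ring

lemma cohnNode_tree (a : ℤ) (w : List Bool) :
    CohnNode a (MT w).1 (MT w).2 (CT a w).1 (CT a w).2 := by
  induction w using List.reverseRecOn with
  | nil => exact cohnNode_root a
  | append_singleton w b ih =>
    cases b
    · simpa [MT, CT, List.foldl_append] using ih.left
    · simpa [MT, CT, List.foldl_append] using ih.right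

/-- For every integer `a` the Cohn matrix at node `w` has upper-right entry the
Markov denominator and upper-left entry `a * den + num`; hence its index equals
`a + mf w`, a Markov fraction lying between `a` and `a + 1/2`. -/
theorem cohn_index_eq_shifted_markov_fraction (a : ℤ) (w : List Bool) :
    cm a w 0 1 = ((mf w).den : ℤ) ∧
    cm a w 0 0 = a * ((mf w).den : ℤ) + (mf w).num ∧
    (cm a w 0 0 : ℚ) / (cm a w 0 1 : ℚ) = (a : ℚ) + mf w ∧
    (a : ℚ) < (cm a w 0 0 : ℚ) / (cm a w 0 1 : ℚ) ∧
    (cm a w 0 0 : ℚ) / (cm a w 0 1 : ℚ) < (a : ℚ) + 1/2 := by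
  obtain ⟨hC, -, -, -, hpos, hlt⟩ := (cohnNode_tree a w).mediant
  have h01 : cm a w 0 1 = ((mf w).den : ℤ) := hC.e01
  have h00 : cm a w 0 0 = a * ((mf w).den : ℤ) + (mf w).num := hC.e00
  have hden : (0 : ℚ) < (mf w).den := by exact_mod_cast (mf w).den_pos
  have hmf : ((mf w).num : ℚ) / (mf w).den = mf w := Rat.num_div_den _
  have hidx : (cm a w 0 0 : ℚ) / (cm a w 0 1 : ℚ) = (a : ℚ) + mf w := by
    rw [h00, h01]
    push_cast
    rw [add_div, mul_div_cancel_right₀ _ hden.ne', hmf]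
  have hmf_pos : 0 < mf w := Rat.num_pos.mp hpos
  have hmf_lt : mf w < 1 / 2 := by
    rw [← hmf, div_lt_div_iff₀ hden two_pos]
    have hlt' : 2 * ((mf w).num : ℚ) < (mf w).den := by exact_mod_cast hlt
    linarith
  exact ⟨h01, h00, hidx, by rw [hidx]; linarith, by rw [hidx]; linarith⟩
end

section
/- For every binary string w : List Bool, the value of the continued fraction attached to node w of the continued fraction tree equals 2 plus the Markov fraction at the mirror node: v(cf(w)) = 2 + mf(w.map (fun b => !b)), where w.map (fun b => !b) is the string w with every bit flipped. In particular, the continued fraction expansions (with an even number of partial quotients, all equal to 1 or 2) of the representatives of the Markov fractions in the interval [2, 5/2] are obtained from [2,2] and [1,1] by the concatenation rule on the Conway topograph. -/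
/-- The value of a finite continued fraction `[c₁, …, c_k] = c₁ + 1/(c₂ + 1/(…))`,
with the convention `1/0 = 0` in `ℚ`. -/
def cfv : List ℕ → ℚ
  | [] => 0
  | c :: l => (c : ℚ) + 1 / cfv l

/-- The continued fraction tree: `CFT [] = ([2,2], [1,1])`, and for `CFT w = (L, R)`,
`CFT (w ++ [false]) = (L, L ++ R)` and `CFT (w ++ [true]) = (L ++ R, R)`. -/
def CFT (w : List Bool) : List ℕ × List ℕ :=
  w.foldl (fun p b => if b then (p.1 ++ p.2, p.2) else (p.1, p.1 ++ p.2)) ([2, 2], [1, 1])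

/-- The continued fraction list at node `w`. -/
def cf (w : List Bool) : List ℕ := (CFT w).1 ++ (CFT w).2

open Matrix

/-- The continuant matrix of a list: the product of the matrices `!![c, 1; 1, 0]`. -/
def contMat (l : List ℕ) : Matrix (Fin 2) (Fin 2) ℤ :=
  (l.map fun c => !![(c : ℤ), 1; 1, 0]).prod

lemma contMat_append (l l' : List ℕ) : contMat (l ++ l') = contMat l * contMat l' := by
  simp [contMat]

lemma contMat_nonneg (l : List ℕ) (i j : Fin 2) : 0 ≤ contMat l i j := by
  induction l generalizing i j with
  | nil => fin_cases i <;> fin_cases j <;> simp [contMat]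
  | cons c l ih =>
    have h : contMat (c :: l) = !![(c : ℤ), 1; 1, 0] * contMat l := by simp [contMat]
    have := ih 0 j
    have := ih 1 j
    rw [h, mul_apply, Fin.sum_univ_two]
    fin_cases i <;> simp <;> positivity

lemma contMat_pos (l : List ℕ) (hl : ∀ c ∈ l, 0 < c) : 0 < contMat l 0 0 := by
  induction l with
  | nil => simp [contMat]
  | cons c l ih =>
    have h : contMat (c :: l) = !![(c : ℤ), 1; 1, 0] * contMat l := by simp [contMat]
    have h0 := ih fun d hd => hl d (by simp [hd])
    have h1 := contMat_nonneg l 1 0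
    have hc : (0 : ℤ) < c := by exact_mod_cast hl c (by simp)
    rw [h, mul_apply, Fin.sum_univ_two]
    simp
    positivity

lemma cfv_eq_contMat (l : List ℕ) (hl : ∀ c ∈ l, 0 < c) :
    cfv l = (contMat l 0 0 : ℚ) / contMat l 1 0 := by
  induction l with
  -- Both sides vanish because `1 / 0 = 0` in `ℚ`.
  | nil => simp [contMat, cfv]
  | cons c l ih =>
    have h : contMat (c :: l) = !![(c : ℤ), 1; 1, 0] * contMat l := by simp [contMat]
    have hl' : ∀ d ∈ l, 0 < d := fun d hd => hl d (by simp [hd])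
    have h0 : (contMat l 0 0 : ℚ) ≠ 0 := by exact_mod_cast (contMat_pos l hl').ne'
    rw [cfv, ih hl', h, mul_apply, mul_apply, Fin.sum_univ_two, Fin.sum_univ_two]
    simp
    field_simp

/-- A Cohn matrix: an integer matrix of determinant `1` whose trace is three times its lower left
entry, that entry being positive. -/
structure IsCohn (A : Matrix (Fin 2) (Fin 2) ℤ) : Prop where
  pos : 0 < A 1 0
  det_eq : A 0 0 * A 1 1 - A 0 1 * A 1 0 = 1
  trace_eq : A 0 0 + A 1 1 = 3 * A 1 0

lemma sm_div {p q r s : ℤ} (hq : 0 < q) (hs : 0 < s) (h : IsCoprime p q) (h' : IsCoprime r s) :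
    sm (p / q) (r / s) = (p * q + r * s) / (q ^ 2 + s ^ 2) := by
  have h1 := Rat.num_div_eq_of_coprime hq (Int.isCoprime_iff_gcd_eq_one.1 h)
  have h2 := Rat.den_div_eq_of_coprime hq (Int.isCoprime_iff_gcd_eq_one.1 h)
  have h3 := Rat.num_div_eq_of_coprime hs (Int.isCoprime_iff_gcd_eq_one.1 h')
  have h4 := Rat.den_div_eq_of_coprime hs (Int.isCoprime_iff_gcd_eq_one.1 h')
  have hden : (((p / q : ℚ).den : ℤ) : ℚ) = q := by rw [h2]
  have hden2 : (((r / s : ℚ).den : ℤ) : ℚ) = s := by rw [h4]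
  rw [Int.cast_natCast] at hden hden2
  unfold sm
  push_cast
  rw [h1, h3, hden, hden2]

/-- The Springborn mediant of the values of two Cohn matrices whose product is Cohn is the value of
the product, all values being shifted by `2`. -/
lemma sm_cohn {A B : Matrix (Fin 2) (Fin 2) ℤ} (hA : IsCohn A) (hB : IsCohn B)
    (hAB : IsCohn (A * B)) :
    ((A * B) 0 0 : ℚ) / (A * B) 1 0 = 2 + sm (B 0 0 / B 1 0 - 2) (A 0 0 / A 1 0 - 2) := by
  obtain ⟨pA, dA, tA⟩ := hA
  obtain ⟨pB, dB, tB⟩ := hB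
  obtain ⟨pC, -, tC⟩ := hAB
  simp only [mul_apply, Fin.sum_univ_two] at pC tC ⊢
  generalize A 0 0 = a, A 0 1 = b, A 1 0 = m, A 1 1 = d at *
  generalize B 0 0 = e, B 0 1 = f, B 1 0 = n, B 1 1 = g at *
  have hm : (m : ℚ) ≠ 0 := by exact_mod_cast pA.ne'
  have hn : (n : ℚ) ≠ 0 := by exact_mod_cast pB.ne'
  have e1 : (a : ℚ) / m - 2 = ((a - 2 * m : ℤ) : ℚ) / m := by push_cast; field_simp
  have e2 : (e : ℚ) / n - 2 = ((e - 2 * n : ℤ) : ℚ) / n := by push_cast; field_simp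
  have c1 : IsCoprime (a - 2 * m) m := ⟨d, 2 * d - b, by linear_combination dA⟩
  have c2 : IsCoprime (e - 2 * n) n := ⟨g, 2 * g - f, by linear_combination dB⟩
  rw [e1, e2, sm_div pB pA c2 c1]
  -- The trace condition on `A * B`, multiplied by `m * n`, is the Markov equation
  -- for `m`, `n` and the lower left entry `m * e + d * n`; the last factor is its Vieta conjugate.
  have key : m ^ 2 + n ^ 2 = (m * e + d * n) * (a * n - m * e) := by
    obtain rfl : d = 3 * m - a := by linarith
    obtain rfl : g = 3 * n - e := by linarith
    linear_combination (-m * n) * tC - n ^ 2 * dA - m ^ 2 * dB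
  have num : (a * e + b * n) * (a * n - m * e) = a * m + e * n := by
    refine mul_left_cancel₀ pA.ne' ?_
    linear_combination (-n * (a * n - m * e)) * dA - a * key
  have hC : ((m * e + d * n : ℤ) : ℚ) ≠ 0 := by exact_mod_cast pC.ne'
  have hs : (n : ℚ) ^ 2 + m ^ 2 ≠ 0 := by positivity
  have keyQ : (m : ℚ) ^ 2 + n ^ 2 = (m * e + d * n) * (a * n - m * e) := by exact_mod_cast key
  have numQ : ((a : ℚ) * e + b * n) * (a * n - m * e) = a * m + e * n := by exact_mod_cast num
  push_cast at hC ⊢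
  rw [div_eq_iff hC]
  field_simp
  linear_combination (a * e + b * n : ℚ) * keyQ + (m * e + d * n : ℚ) * numQ

/-- By Cayley–Hamilton for `A`, the trace condition for `A * (A * B)` is a linear combination of
those for `A * B` and `B`. -/
lemma IsCohn.mul_left {A B : Matrix (Fin 2) (Fin 2) ℤ} (hA : IsCohn A) (hB : IsCohn B)
    (hAB : IsCohn (A * B)) (hpos : 0 < (A * (A * B)) 1 0) : IsCohn (A * (A * B)) := by
  obtain ⟨-, dA, tA⟩ := hA
  obtain ⟨-, -, tB⟩ := hB
  obtain ⟨-, dC, tC⟩ := hAB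
  refine ⟨hpos, ?_, ?_⟩
  · generalize A * B = C at *
    simp only [mul_apply, Fin.sum_univ_two]
    linear_combination dA + (A 0 0 * A 1 1 - A 0 1 * A 1 0) * dC
  · simp only [mul_apply, Fin.sum_univ_two] at tC ⊢
    linear_combination (A 0 0 + A 1 1) * tC - (A 0 0 * A 1 1 - A 0 1 * A 1 0) * tB

/-- By Cayley–Hamilton for `B`, the trace condition for `A * B * B` is a linear combination of
those for `A * B` and `A`. -/
lemma IsCohn.mul_right {A B : Matrix (Fin 2) (Fin 2) ℤ} (hA : IsCohn A) (hB : IsCohn B)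
    (hAB : IsCohn (A * B)) (hpos : 0 < (A * B * B) 1 0) : IsCohn (A * B * B) := by
  obtain ⟨-, -, tA⟩ := hA
  obtain ⟨-, dB, tB⟩ := hB
  obtain ⟨-, dC, tC⟩ := hAB
  refine ⟨hpos, ?_, ?_⟩
  · generalize A * B = C at *
    simp only [mul_apply, Fin.sum_univ_two]
    linear_combination dB + (B 0 0 * B 1 1 - B 0 1 * B 1 0) * dC
  · simp only [mul_apply, Fin.sum_univ_two] at tC ⊢
    linear_combination (B 0 0 + B 1 1) * tC - (B 0 0 * B 1 1 - B 0 1 * B 1 0) * tA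

/-- A list of positive partial quotients whose continuant matrix is Cohn. -/
def CohnList (l : List ℕ) : Prop := (∀ c ∈ l, 0 < c) ∧ IsCohn (contMat l)

lemma contMat_append_pos {l l' : List ℕ} (hl : CohnList l) (hl' : CohnList l') :
    0 < (contMat l * contMat l') 1 0 := by
  have h1 := hl.2.pos
  have h2 := contMat_pos l' hl'.1
  have h3 := contMat_nonneg l 1 1
  have h4 := hl'.2.pos
  rw [mul_apply, Fin.sum_univ_two]
  positivity

/-- The relation between a node `p` of the continued fraction tree and the mirror node `q` of the
Markov fraction tree. -/
structure Mirror (p : List ℕ × List ℕ) (q : ℚ × ℚ) : Prop where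
  left : CohnList p.1
  right : CohnList p.2
  append : CohnList (p.1 ++ p.2)
  fst_eq : q.1 = cfv p.2 - 2
  snd_eq : q.2 = cfv p.1 - 2

lemma Mirror.cfv_append {p : List ℕ × List ℕ} {q : ℚ × ℚ} (h : Mirror p q) :
    cfv (p.1 ++ p.2) = 2 + sm q.1 q.2 := by
  have hC := h.append.2
  rw [contMat_append] at hC
  rw [h.fst_eq, h.snd_eq, cfv_eq_contMat _ h.append.1, cfv_eq_contMat _ h.left.1,
    cfv_eq_contMat _ h.right.1, contMat_append]
  exact sm_cohn h.left.2 h.right.2 hC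

lemma forall_mem_append_pos {l l' : List ℕ} (hl : CohnList l) (hl' : CohnList l') :
    ∀ c ∈ l ++ l', 0 < c := fun c hc => (List.mem_append.1 hc).elim (hl.1 c) (hl'.1 c)

lemma Mirror.step_false {p : List ℕ × List ℕ} {q : ℚ × ℚ} (h : Mirror p q) :
    Mirror (p.1, p.1 ++ p.2) (sm q.1 q.2, q.2) where
  left := h.left
  right := h.append
  append := by
    refine ⟨forall_mem_append_pos h.left h.append, ?_⟩
    have hC := h.append.2
    have hp := contMat_append_pos h.left h.append
    simp only [contMat_append] at hC hp ⊢
    exact h.left.2.mul_left h.right.2 hC hp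
  fst_eq := by simp [h.cfv_append]
  snd_eq := h.snd_eq

lemma Mirror.step_true {p : List ℕ × List ℕ} {q : ℚ × ℚ} (h : Mirror p q) :
    Mirror (p.1 ++ p.2, p.2) (q.1, sm q.1 q.2) where
  left := h.append
  right := h.right
  append := by
    refine ⟨forall_mem_append_pos h.append h.right, ?_⟩
    have hC := h.append.2
    have hp := contMat_append_pos h.append h.right
    simp only [contMat_append] at hC hp ⊢
    exact h.left.2.mul_right h.right.2 hC hp
  fst_eq := h.fst_eq
  snd_eq := by simp [h.cfv_append]

lemma mirror_root : Mirror ([2, 2], [1, 1]) (0, 1 / 2) := by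
  refine ⟨⟨by simp, ?_⟩, ⟨by simp, ?_⟩, ⟨by simp, ?_⟩, by norm_num [cfv], by norm_num [cfv]⟩ <;>
  constructor <;> simp [contMat]

lemma mirror_CFT_MT (w : List Bool) : Mirror (CFT w) (MT (w.map fun b => !b)) := by
  induction w using List.reverseRecOn with
  | nil => exact mirror_root
  | append_singleton w b ih =>
    cases b
    · simpa [CFT, MT] using ih.step_false
    · simpa [CFT, MT] using ih.step_true

/-- **Theorem 4.1.** The value of the continued fraction at node `w` of the
concatenation tree equals `2` plus the Markov fraction at the mirror node. -/
theorem cf_value_eq_two_add_markov_fraction (w : List Bool) :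
    cfv (cf w) = 2 + mf (w.map (fun b => !b)) :=
  (mirror_CFT_MT w).cfv_append
end

section
/- For every integer a and every binary string w : List Bool, the Cohn matrix at node w has determinant 1 and trace equal to three times its upper-right entry: det(cm_a(w)) = 1 and trace(cm_a(w)) = 3 · (cm_a(w)) 0 1. The same holds for both components of the pair CT_a(w). -/
/-- Determinant `1`, and trace equal to three times the upper-right entry. -/
def IsCohn_s3 (M : Matrix (Fin 2) (Fin 2) ℤ) : Prop :=
  M.det = 1 ∧ Matrix.trace M = 3 * M 0 1

/-- Cayley–Hamilton for a `2 × 2` matrix of determinant `1`. -/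
lemma mul_self_of_det_one {M : Matrix (Fin 2) (Fin 2) ℤ} (h : M.det = 1) :
    M * M = M.trace • M - 1 := by
  rw [Matrix.det_fin_two] at h
  ext i j
  -- `zsmul_eq_mul` would turn the integer scalar `M.trace` into a cast to a matrix.
  fin_cases i <;> fin_cases j <;>
    simp [Matrix.mul_apply, Fin.sum_univ_two, Matrix.trace_fin_two, -zsmul_eq_mul] <;> linarith

lemma IsCohn_s3.mul_left {L R : Matrix (Fin 2) (Fin 2) ℤ} (hL : IsCohn_s3 L) (hR : IsCohn_s3 R)
    (hP : IsCohn_s3 (L * R)) : IsCohn_s3 (L * (L * R)) := by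
  refine ⟨by rw [Matrix.det_mul, hL.1, hP.1, one_mul], ?_⟩
  have h : L * (L * R) = L.trace • (L * R) - R := by
    rw [← mul_assoc, mul_self_of_det_one hL.1, sub_mul, smul_mul_assoc, one_mul]
  rw [h, Matrix.trace_sub, Matrix.trace_smul, hP.2, hR.2, Matrix.sub_apply, Matrix.smul_apply,
    smul_eq_mul, smul_eq_mul]
  ring

lemma IsCohn_s3.mul_right {L R : Matrix (Fin 2) (Fin 2) ℤ} (hL : IsCohn_s3 L) (hR : IsCohn_s3 R)
    (hP : IsCohn_s3 (L * R)) : IsCohn_s3 (L * R * R) := by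
  refine ⟨by rw [Matrix.det_mul, hR.1, hP.1, one_mul], ?_⟩
  have h : L * R * R = R.trace • (L * R) - L := by
    rw [mul_assoc, mul_self_of_det_one hR.1, mul_sub, mul_smul_comm, mul_one]
  rw [h, Matrix.trace_sub, Matrix.trace_smul, hP.2, hL.2, Matrix.sub_apply, Matrix.smul_apply,
    smul_eq_mul, smul_eq_mul]
  ring

lemma isCohn_Amat (a : ℤ) : IsCohn_s3 (Amat a) := by
  constructor <;> simp [Amat, Matrix.det_fin_two, Matrix.trace_fin_two]
  ring

lemma isCohn_Bmat (a : ℤ) : IsCohn_s3 (Bmat a) := by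
  constructor <;> simp [Bmat, Matrix.det_fin_two, Matrix.trace_fin_two] <;> ring

lemma isCohn_Amat_mul_Bmat (a : ℤ) : IsCohn_s3 (Amat a * Bmat a) := by
  refine ⟨by rw [Matrix.det_mul, (isCohn_Amat a).1, (isCohn_Bmat a).1, one_mul], ?_⟩
  simp [Amat, Bmat, Matrix.trace_fin_two]
  ring

lemma isCohn_CT (a : ℤ) (w : List Bool) :
    IsCohn_s3 (CT a w).1 ∧ IsCohn_s3 (CT a w).2 ∧ IsCohn_s3 ((CT a w).1 * (CT a w).2) := by
  induction w using List.reverseRecOn with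
  | nil => exact ⟨isCohn_Amat a, isCohn_Bmat a, isCohn_Amat_mul_Bmat a⟩
  | append_singleton w b ih =>
    obtain ⟨hL, hR, hP⟩ := ih
    have hstep : CT a (w ++ [b]) = if b then ((CT a w).1 * (CT a w).2, (CT a w).2)
        else ((CT a w).1, (CT a w).1 * (CT a w).2) := by
      simp [CT, List.foldl_append]
    rw [hstep]
    cases b
    · exact ⟨hL, hP, hL.mul_left hR hP⟩
    · exact ⟨hP, hR, hL.mul_right hR hP⟩

/-- Every Cohn matrix on the Cohn tree with parameter `a` (including both components
of the pair at each node) has determinant `1` and trace equal to three times its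
upper-right entry. -/
theorem cohn_matrix_det_and_trace (a : ℤ) (w : List Bool) :
    (cm a w).det = 1 ∧ Matrix.trace (cm a w) = 3 * cm a w 0 1 ∧
    ((CT a w).1).det = 1 ∧ Matrix.trace ((CT a w).1) = 3 * (CT a w).1 0 1 ∧
    ((CT a w).2).det = 1 ∧ Matrix.trace ((CT a w).2) = 3 * (CT a w).2 0 1 := by
  obtain ⟨hL, hR, hP⟩ := isCohn_CT a w
  exact ⟨hP.1, hP.2, hL.1, hL.2, hR.1, hR.2⟩
end

section
/- For every binary string w : List Bool, the denominators of the three Markov fractions around node w form a Markov triple: writing q₁ = ((MT w).1).den, q₂ = ((MT w).2).den and q₃ = (mf w).den, one has q₁² + q₂² + q₃² = 3·q₁·q₂·q₃. -/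
/-- The invariant of neighbouring fractions `x < y` of the tree, in terms of the determinant
`y.num * x.den - x.num * y.den` over `ℤ`. -/
structure MarkovPair (x y : ℚ) : Prop where
  pos : 0 < y.num * x.den - x.num * y.den
  coprime : IsCoprime (x.den : ℤ) (y.den : ℤ)
  markov : (x.den : ℤ) ^ 2 + (y.den : ℤ) ^ 2 + (y.num * x.den - x.num * y.den) ^ 2 =
    3 * x.den * y.den * (y.num * x.den - x.num * y.den)
  dvd : y.num * x.den - x.num * y.den ∣ x.num * x.den + y.num * y.den

/-- Coprimality in Markov triples and their Vieta conjugates: if `d * c = a ^ 2 + b ^ 2`, then both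
`d` and `c` inherit coprimality to `b` from `a`. -/
lemma coprime_of_mul_eq {a b c d : ℤ} (h : IsCoprime a b) (hc : d * c = a ^ 2 + b ^ 2) :
    IsCoprime b d ∧ IsCoprime b c := by
  have h1 : IsCoprime b (a ^ 2 + b * b) := (h.symm.pow_right (n := 2)).add_mul_left_right b
  rw [← pow_two, ← hc] at h1
  exact ⟨h1.of_mul_right_left, h1.of_mul_right_right⟩

/-- The mediant of a Markov pair in lowest terms, with its determinants against both parents and
its relation to the determinant of the parents. -/
lemma MarkovPair.exists_mediant {x y : ℚ} (h : MarkovPair x y) :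
    ∃ d : ℤ, 0 < d ∧ d * (sm x y).num = x.num * x.den + y.num * y.den ∧
      d * (sm x y).den = (x.den : ℤ) ^ 2 + (y.den : ℤ) ^ 2 ∧
      (sm x y).den + d = 3 * x.den * y.den ∧
      (sm x y).num * x.den - x.num * (sm x y).den = y.den ∧
      y.num * (sm x y).den - (sm x y).num * y.den = x.den := by
  obtain ⟨hpos, ⟨a, b, hab⟩, hm, ⟨p, hp⟩⟩ := h
  have hx : (0 : ℤ) < x.den := by exact_mod_cast x.den_pos
  have hsm : sm x y = ((x.num * x.den + y.num * y.den : ℤ) : ℚ) /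
      (((x.den : ℤ) ^ 2 + (y.den : ℤ) ^ 2 : ℤ) : ℚ) := by
    simp [sm]
  obtain ⟨d, hd⟩ : ∃ d, d = y.num * x.den - x.num * y.den := ⟨_, rfl⟩
  rw [← hd] at hpos hm hp
  obtain ⟨q, hq⟩ : ∃ q : ℤ, q = 3 * x.den * y.den - d := ⟨_, rfl⟩
  have hdq : d * q = (x.den : ℤ) ^ 2 + (y.den : ℤ) ^ 2 := by
    rw [hq]; linear_combination -hm
  have hqpos : 0 < q := pos_of_mul_pos_right (by rw [hdq]; positivity) hpos.le
  have e1 : p * x.den - x.num * q = y.den :=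
    mul_left_cancel₀ hpos.ne' (by
      linear_combination -(x.den : ℤ) * hp - x.num * hdq - (y.den : ℤ) * hd)
  have e2 : y.num * q - p * y.den = x.den :=
    mul_left_cancel₀ hpos.ne' (by
      linear_combination (y.den : ℤ) * hp + y.num * hdq - (x.den : ℤ) * hd)
  have hcop : IsCoprime p q :=
    ⟨b * x.den - a * y.den, a * y.num - b * x.num, by
      linear_combination hab + b * e1 + a * e2⟩
  have hs : sm x y = (p : ℚ) / (q : ℚ) := by
    rw [hsm, hp, ← hdq]
    push_cast
    exact mul_div_mul_left _ _ (by exact_mod_cast hpos.ne')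
  have hcop' := Int.isCoprime_iff_nat_coprime.mp hcop
  have hnum : (sm x y).num = p := by rw [hs]; exact Rat.num_div_eq_of_coprime hqpos hcop'
  have hden : ((sm x y).den : ℤ) = q := by rw [hs]; exact Rat.den_div_eq_of_coprime hqpos hcop'
  rw [hnum, hden]
  exact ⟨d, hpos, hp.symm, hdq, by rw [hq]; ring, e1, e2⟩

lemma MarkovPair.markov_mediant {x y : ℚ} (h : MarkovPair x y) :
    (x.den : ℤ) ^ 2 + (y.den : ℤ) ^ 2 + ((sm x y).den : ℤ) ^ 2 =
      3 * x.den * y.den * (sm x y).den := by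
  obtain ⟨d, -, -, hq, hs, -, -⟩ := h.exists_mediant
  linear_combination -hq + ((sm x y).den : ℤ) * hs

lemma MarkovPair.left {x y : ℚ} (h : MarkovPair x y) : MarkovPair x (sm x y) := by
  obtain ⟨d, -, hp, hq, hs, e1, -⟩ := h.exists_mediant
  have hm := h.markov_mediant
  refine ⟨?_, ?_, ?_, ?_⟩
  · rw [e1]; exact_mod_cast y.den_pos
  · exact (coprime_of_mul_eq h.coprime.symm (hq.trans (add_comm _ _))).2
  · rw [e1]; linear_combination hm
  · rw [e1]
    -- `d` is invertible modulo `y.den`, so divisibility may be tested after multiplying by `d`.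
    refine (coprime_of_mul_eq h.coprime hq).1.dvd_of_dvd_mul_left
      ⟨3 * x.num * x.den ^ 2 + y.num * (sm x y).den, ?_⟩
    linear_combination ((sm x y).den : ℤ) * hp + x.num * x.den * hs

lemma MarkovPair.right {x y : ℚ} (h : MarkovPair x y) : MarkovPair (sm x y) y := by
  obtain ⟨d, -, hp, hq, hs, -, e2⟩ := h.exists_mediant
  have hm := h.markov_mediant
  refine ⟨?_, ?_, ?_, ?_⟩
  · rw [e2]; exact_mod_cast x.den_pos
  · exact (coprime_of_mul_eq h.coprime hq).2.symm
  · rw [e2]; linear_combination hm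
  · rw [e2]
    -- As on the left, with `d` invertible modulo `x.den`.
    refine (coprime_of_mul_eq h.coprime.symm (hq.trans (add_comm _ _))).1.dvd_of_dvd_mul_left
      ⟨3 * y.num * y.den ^ 2 + x.num * (sm x y).den, ?_⟩
    linear_combination ((sm x y).den : ℤ) * hp + y.num * y.den * hs

lemma markovPair_MT (w : List Bool) : MarkovPair (MT w).1 (MT w).2 := by
  induction w using List.reverseRecOn with
  | nil =>
    have h1 : (1 / 2 : ℚ).num = 1 := by norm_num
    have h2 : (1 / 2 : ℚ).den = 2 := by norm_num
    refine ⟨?_, ?_, ?_, ?_⟩ <;> simp only [MT, List.foldl_nil, h1, h2] <;> norm_num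
  | append_singleton w b ih =>
    have hstep : MT (w ++ [b]) =
        if b then (sm (MT w).1 (MT w).2, (MT w).2) else ((MT w).1, sm (MT w).1 (MT w).2) := by
      simp [MT, List.foldl_append]
    rw [hstep]
    cases b
    · exact ih.left
    · exact ih.right

/-- The denominators of the three Markov fractions around any node of the tree
form a Markov triple. -/
theorem markov_denominators_form_markov_triple (w : List Bool) :
    ((MT w).1).den ^ 2 + ((MT w).2).den ^ 2 + (mf w).den ^ 2 =
      3 * ((MT w).1).den * ((MT w).2).den * (mf w).den := by
  exact_mod_cast (markovPair_MT w).markov_mediant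
end

section
/- For every binary string w : List Bool, writing (p₁, q₁), (p₂, q₂), (p₃, q₃) for the numerator-denominator pairs of (MT w).1, (MT w).2 and mf(w) respectively, the Markov fractions at the two children of w are given in lowest terms by: q₂ divides both p₁·q₁ + p₃·q₃ and q₁² + q₃², with (mf(w ++ [false])).num = (p₁·q₁ + p₃·q₃)/q₂ and (mf(w ++ [false])).den = (q₁² + q₃²)/q₂; and q₁ divides both p₂·q₂ + p₃·q₃ and q₂² + q₃², with (mf(w ++ [true])).num = (p₂·q₂ + p₃·q₃)/q₁ and (mf(w ++ [true])).den = (q₂² + q₃²)/q₁. -/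
/-- The invariant of the Markov fraction tree: `x < y` are neighbours with determinant `k`, and
their denominators together with `k` form a Markov triple. -/
structure Neighbours (x y : ℚ) (k : ℤ) : Prop where
  pos : 0 < k
  det : y.num * (x.den : ℤ) - x.num * (y.den : ℤ) = k
  markov : (x.den : ℤ) ^ 2 + (y.den : ℤ) ^ 2 + k ^ 2 = 3 * x.den * y.den * k
  coprime : IsCoprime (x.den : ℤ) (y.den : ℤ)

/-- Coprimality of two members of a Markov triple spreads to the third. -/
lemma isCoprime_of_markov {a b k : ℤ} (h : IsCoprime a b)
    (hm : a ^ 2 + b ^ 2 + k ^ 2 = 3 * a * b * k) : IsCoprime a k := by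
  have h1 : IsCoprime a (b ^ 2) := h.pow_right
  have h2 : b ^ 2 = -k ^ 2 + a * (3 * b * k - a) := by linear_combination hm
  rw [h2, IsCoprime.add_mul_left_right_iff, IsCoprime.neg_right_iff] at h1
  exact (IsCoprime.pow_right_iff (by norm_num)).1 h1

/-- The mediant of neighbours in lowest terms: cancel exactly `k`. -/
lemma Neighbours.sm_spec {x y : ℚ} {k : ℤ} (h : Neighbours x y k) :
    (sm x y).num * k = x.num * x.den + y.num * y.den ∧
      ((sm x y).den : ℤ) * k = (x.den : ℤ) ^ 2 + (y.den : ℤ) ^ 2 := by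
  obtain ⟨hk, hd, hm, hc⟩ := h
  have hs : sm x y = ((x.num * x.den + y.num * y.den : ℤ) : ℚ) /
      (((x.den : ℤ) ^ 2 + (y.den : ℤ) ^ 2 : ℤ) : ℚ) := by
    rw [sm]; push_cast; rfl
  have hx : (0 : ℤ) < x.den := by exact_mod_cast x.pos
  have hy : (0 : ℤ) < y.den := by exact_mod_cast y.pos
  generalize (x.den : ℤ) = a at *
  generalize (y.den : ℤ) = b at *
  generalize x.num = p at *
  generalize y.num = r at *
  have hk0 : k ≠ 0 := hk.ne'
  have hden : a ^ 2 + b ^ 2 = (3 * a * b - k) * k := by linear_combination hm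
  have hdvd : k ∣ p * a + r * b := by
    refine (isCoprime_of_markov hc hm).symm.dvd_of_dvd_mul_left
      ⟨p * (3 * a * b - k) + b, ?_⟩
    linear_combination p * hden + b * hd
  obtain ⟨t, ht⟩ := hdvd
  have e1 : t * a - p * (3 * a * b - k) = b := by
    apply mul_left_cancel₀ hk0
    linear_combination -a * ht + p * hden + b * hd
  have e2 : r * (3 * a * b - k) - t * b = a := by
    apply mul_left_cancel₀ hk0
    linear_combination b * ht - r * hden + a * hd
  have hpos : 0 < 3 * a * b - k := by
    refine pos_of_mul_pos_left (b := k) ?_ hk.le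
    rw [← hden]; positivity
  have hcop : IsCoprime t (3 * a * b - k) := by
    -- Substitute the expressions `e1`, `e2` for `b`, `a` in the Bézout relation of `a, b`.
    obtain ⟨u, v, huv⟩ := hc
    exact ⟨v * a - u * b, u * r - v * p, by linear_combination huv + u * e2 + v * e1⟩
  have hcop' : Nat.Coprime t.natAbs (3 * a * b - k).natAbs :=
    Int.isCoprime_iff_gcd_eq_one.1 hcop
  have hfrac : sm x y = (t : ℚ) / ((3 * a * b - k : ℤ) : ℚ) := by
    rw [hs, ht, hden, mul_comm k t]
    push_cast
    exact mul_div_mul_right _ _ (by exact_mod_cast hk0)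
  have hn : (sm x y).num = t := by
    rw [hfrac]; exact Rat.num_div_eq_of_coprime hpos hcop'
  have hdn : ((sm x y).den : ℤ) = 3 * a * b - k := by
    rw [hfrac]; exact Rat.den_div_eq_of_coprime hpos hcop'
  rw [hn, hdn]
  exact ⟨by rw [ht, mul_comm], hden.symm⟩

/-- Both pairs formed with the mediant are again neighbours, with `k` replaced by the denominator
of the dropped fraction. -/
lemma Neighbours.step {x y : ℚ} {k : ℤ} (h : Neighbours x y k) :
    Neighbours x (sm x y) y.den ∧ Neighbours (sm x y) y x.den := by
  obtain ⟨hn, hdn⟩ := h.sm_spec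
  obtain ⟨hk, hd, hm, hc⟩ := h
  have hx : (0 : ℤ) < x.den := by exact_mod_cast x.pos
  have hy : (0 : ℤ) < y.den := by exact_mod_cast y.pos
  have hk0 : k ≠ 0 := hk.ne'
  have hq : ((sm x y).den : ℤ) = 3 * x.den * y.den - k := by
    apply mul_right_cancel₀ hk0
    linear_combination hdn + hm
  have hM : (x.den : ℤ) ^ 2 + (y.den : ℤ) ^ 2 + ((sm x y).den : ℤ) ^ 2 =
      3 * x.den * y.den * (sm x y).den := by
    rw [hq]; linear_combination hm
  refine ⟨⟨hy, ?_, by linear_combination hM, isCoprime_of_markov hc hM⟩,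
    ⟨hx, ?_, by linear_combination hM,
      (isCoprime_of_markov hc.symm (by linear_combination hM)).symm⟩⟩
  · apply mul_right_cancel₀ hk0
    linear_combination x.den * hn - x.num * hdn + y.den * hd
  · apply mul_right_cancel₀ hk0
    linear_combination -y.den * hn + y.num * hdn + x.den * hd

lemma MT_append_false (w : List Bool) : MT (w ++ [false]) = ((MT w).1, mf w) := by
  simp [MT, mf, List.foldl_append]

lemma MT_append_true (w : List Bool) : MT (w ++ [true]) = (mf w, (MT w).2) := by
  simp [MT, mf, List.foldl_append]

lemma exists_neighbours_MT (w : List Bool) : ∃ k, Neighbours (MT w).1 (MT w).2 k := by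
  induction w using List.reverseRecOn with
  | nil =>
    have h1 : (1 / 2 : ℚ).num = 1 := by norm_num
    have h2 : (1 / 2 : ℚ).den = 2 := by norm_num
    refine ⟨1, by norm_num, ?_, ?_, ?_⟩ <;> simp only [MT, List.foldl_nil, h1, h2] <;> norm_num
  | append_singleton w b ih =>
    obtain ⟨k, hk⟩ := ih
    cases b
    · rw [MT_append_false]; exact ⟨_, hk.step.1⟩
    · rw [MT_append_true]; exact ⟨_, hk.step.2⟩

/-- Relations (9)–(10): the Markov fractions at the two children of a node, in lowest
terms, are obtained from the three Markov fractions around the node by the formulas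
`p₂' = (p₁q₁ + p₃q₃)/q₂`, `q₂' = (q₁² + q₃²)/q₂` and
`p₁' = (p₂q₂ + p₃q₃)/q₁`, `q₁' = (q₂² + q₃²)/q₁`. -/
theorem markov_fraction_children (w : List Bool) :
    (((MT w).2).den : ℤ) ∣ ((MT w).1).num * (((MT w).1).den : ℤ) + (mf w).num * ((mf w).den : ℤ) ∧
    (((MT w).2).den : ℤ) ∣ (((MT w).1).den : ℤ) ^ 2 + ((mf w).den : ℤ) ^ 2 ∧
    (mf (w ++ [false])).num =
      (((MT w).1).num * (((MT w).1).den : ℤ) + (mf w).num * ((mf w).den : ℤ)) / (((MT w).2).den : ℤ) ∧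
    ((mf (w ++ [false])).den : ℤ) =
      ((((MT w).1).den : ℤ) ^ 2 + ((mf w).den : ℤ) ^ 2) / (((MT w).2).den : ℤ) ∧
    (((MT w).1).den : ℤ) ∣ ((MT w).2).num * (((MT w).2).den : ℤ) + (mf w).num * ((mf w).den : ℤ) ∧
    (((MT w).1).den : ℤ) ∣ (((MT w).2).den : ℤ) ^ 2 + ((mf w).den : ℤ) ^ 2 ∧
    (mf (w ++ [true])).num =
      (((MT w).2).num * (((MT w).2).den : ℤ) + (mf w).num * ((mf w).den : ℤ)) / (((MT w).1).den : ℤ) ∧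
    ((mf (w ++ [true])).den : ℤ) =
      ((((MT w).2).den : ℤ) ^ 2 + ((mf w).den : ℤ) ^ 2) / (((MT w).1).den : ℤ) := by
  obtain ⟨k, hk⟩ := exists_neighbours_MT w
  obtain ⟨hl, hr⟩ := hk.step
  have e1 : mf (w ++ [false]) = sm (MT w).1 (mf w) := by rw [mf, MT_append_false]
  have e2 : mf (w ++ [true]) = sm (mf w) (MT w).2 := by rw [mf, MT_append_true]
  obtain ⟨a1, a2⟩ := hl.sm_spec
  obtain ⟨b1, b2⟩ := hr.sm_spec
  change (sm (MT w).1 (mf w)).num * _ = _ + (mf w).num * (mf w).den at a1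
  change ((sm (MT w).1 (mf w)).den : ℤ) * _ = _ + ((mf w).den : ℤ) ^ 2 at a2
  change (sm (mf w) (MT w).2).num * _ = (mf w).num * (mf w).den + _ at b1
  change ((sm (mf w) (MT w).2).den : ℤ) * _ = ((mf w).den : ℤ) ^ 2 + _ at b2
  rw [add_comm] at b1 b2
  rw [e1, e2, ← a1, ← a2, ← b1, ← b2]
  refine ⟨dvd_mul_left _ _, dvd_mul_left _ _, ?_, ?_, dvd_mul_left _ _, dvd_mul_left _ _, ?_, ?_⟩
  · exact (Int.mul_ediv_cancel _ hl.pos.ne').symm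
  · exact (Int.mul_ediv_cancel _ hl.pos.ne').symm
  · exact (Int.mul_ediv_cancel _ hr.pos.ne').symm
  · exact (Int.mul_ediv_cancel _ hr.pos.ne').symm
end

section
/- Let p₁, q₁, p₂, q₂, p₃, q₃ be integers with q₁, q₂, q₃ > 0 satisfying q₁² + q₂² + q₃² = 3q₁q₂q₃, p₂q₃ − p₃q₂ = q₁ and p₃q₁ − p₁q₃ = q₂. For k = 2, 3 set c_k := (3p_kq_k − p_k² − 1)/q_k ∈ ℚ. Then the first row of the product of ℚ-matrices [[p₃, q₃], [c₃, 3q₃ − p₃]] · [[p₂, q₂], [c₂, 3q₂ − p₂]] equals ((p₂q₂ + p₃q₃)/q₁, (q₂² + q₃²)/q₁). -/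
/-- The key matrix identity in the proof of Theorem 3.1: the first row of the
product of the Cohn-type matrices attached to `(p₃, q₃)` and `(p₂, q₂)` is
`((p₂q₂ + p₃q₃)/q₁, (q₂² + q₃²)/q₁)`. -/
theorem cohn_matrix_product_first_row
    (p₁ q₁ p₂ q₂ p₃ q₃ : ℤ) (hq₁ : 0 < q₁) (hq₂ : 0 < q₂) (hq₃ : 0 < q₃)
    (hMarkov : q₁^2 + q₂^2 + q₃^2 = 3 * q₁ * q₂ * q₃)
    (h₁ : p₂ * q₃ - p₃ * q₂ = q₁) (h₂ : p₃ * q₁ - p₁ * q₃ = q₂) :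
    let c₂ : ℚ := (3 * p₂ * q₂ - p₂^2 - 1 : ℤ) / (q₂ : ℚ)
    let c₃ : ℚ := (3 * p₃ * q₃ - p₃^2 - 1 : ℤ) / (q₃ : ℚ)
    let M₂ : Matrix (Fin 2) (Fin 2) ℚ := !![(p₂ : ℚ), (q₂ : ℚ); c₂, (3 * q₂ - p₂ : ℤ)]
    let M₃ : Matrix (Fin 2) (Fin 2) ℚ := !![(p₃ : ℚ), (q₃ : ℚ); c₃, (3 * q₃ - p₃ : ℤ)]
    (M₃ * M₂) 0 0 = ((p₂ * q₂ + p₃ * q₃ : ℤ) : ℚ) / (q₁ : ℚ) ∧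
    (M₃ * M₂) 0 1 = ((q₂^2 + q₃^2 : ℤ) : ℚ) / (q₁ : ℚ) := by
  have hQ₁ : (q₁ : ℚ) ≠ 0 := by exact_mod_cast hq₁.ne'
  have hQ₂ : (q₂ : ℚ) ≠ 0 := by exact_mod_cast hq₂.ne'
  have hM : (q₁ : ℚ)^2 + q₂^2 + q₃^2 = 3 * q₁ * q₂ * q₃ := by exact_mod_cast hMarkov
  have hD : (p₂ : ℚ) * q₃ - p₃ * q₂ = q₁ := by exact_mod_cast h₁
  intro c₂ c₃ M₂ M₃
  simp only [M₂, M₃, c₂, Matrix.mul_apply, Fin.sum_univ_two, Matrix.of_apply,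
    Matrix.cons_val_zero, Matrix.cons_val_one]
  push_cast
  constructor
  -- The relation `p₂q₃ - p₃q₂ = q₁` turns `q₂` times the entry into `3p₂q₂q₃ - p₂q₁ - q₃`;
  -- multiplying by `q₁`, the Markov equation gives `p₂(q₂² + q₃²) - q₁q₃`, and the
  -- same relation once more gives `q₂(p₂q₂ + p₃q₃)`.
  · rw [eq_div_iff hQ₁]
    field_simp
    linear_combination (-(p₂ : ℚ) * q₁ + q₃) * hD - p₂ * hM
  -- The entry is `3q₂q₃ - q₁` by the same relation; apply the Markov equation.
  · rw [eq_div_iff hQ₁]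
    linear_combination -(q₁ : ℚ) * hD - hM
end
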